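/- Schnorr–Stimm theorem for Bernoulli measures: for X ∈ A^ω and a positive Bernoulli measure μ, X is μ-normal if and only if no μ-gambler wins by betting on X (i.e., every μ-gambler 𝒢 has sup_n capital(𝒢, X[0..n]) < ∞). This may assume the Agafonov theorem for Bernoulli measures as a hypothesis. -/

import Mathlib

open Filter Topology

/-- The prefix `X(0) X(1) ⋯ X(n-1)` of an infinite sequence, as a list. -/
def pref {A : Type*} (X : ℕ → A) (n : ℕ) : List A := (List.range n).map X

/-- Number of occurrences of the word `w` in the prefix `X[0..n]`
(indices `i` with `0 ≤ i ≤ n - |w| + 1`). -/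
def nbocc {A : Type*} [DecidableEq A] (w : List A) (X : ℕ → A) (n : ℕ) : ℕ :=
  ((Finset.range (n + 2 - w.length)).filter
    (fun i => (List.range w.length).map (fun j => X (i + j)) = w)).card

/-- Frequency of occurrences of `w` in `X[0..n]`. -/
noncomputable def freq {A : Type*} [DecidableEq A] (w : List A) (X : ℕ → A) (n : ℕ) : ℝ :=
  (nbocc w X n : ℝ) / ((n + 2 - w.length : ℕ) : ℝ)

/-- The Bernoulli measure of a word: product of the measures of its letters. -/
def wmeas {A : Type*} (μ : A → ℝ) (w : List A) : ℝ := (w.map μ).prod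

/-- `X` is `μ`-normal: every nonempty word occurs with asymptotic frequency `μ(w)`. -/
def BNormal {A : Type*} [DecidableEq A] (μ : A → ℝ) (X : ℕ → A) : Prop :=
  ∀ w : List A, w ≠ [] → Tendsto (fun n => freq w X n) atTop (𝓝 (wmeas μ w))

/-- Iterated transition function of a deterministic automaton. -/
def dstar {Q A : Type*} (δ : Q → A → Q) (q : Q) (w : List A) : Q := w.foldl δ q

/-- Capital of an automatic gambler started in state `q` after reading `w`. -/
def capital {Q A : Type*} (δ : Q → A → Q) (γ : Q → A → ℝ) : Q → List A → ℝ
  | _, [] => 1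
  | q, a :: w => γ q a * capital δ γ (δ q a) w

/-!
Along `X`, the capital of a gambler is the product over its states `q` of the capital won by the
fixed bet `γ q` at the times spent in `q`. If each state selects a balanced subsequence, then by
Gibbs' inequality a fair bet that is not identically `1` has negative average log-gain on it (or
eventually loses everything, if it vanishes somewhere), so each factor is bounded.

Conversely, let `h` have `μ`-mean zero and let a gambler who remembers the last `|u|` letters stake
`1 + ε h` on the next letter each time it has just read `u`. Since `log (1 + x) ≥ x - 2 x²`, bounded
capital forces `ε S n ≤ C + 2 ε² n` for the sum `S n` of the values of `h` after the occurrences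
of `u`; letting `ε → 0` with both signs gives `S n = o(n)`. For `h = 1_a - μ a` this says that `u a`
has asymptotic frequency `μ a` times that of `u`, and induction on the word gives normality.
-/

section Bets

variable {A : Type*} {μ : A → ℝ}

/-- A bet on one letter that is fair under `μ`: `g a` is the factor applied to the capital when the
letter is `a`. A `μ`-gambler is a family `γ` with `IsFairBet μ (γ q)` for every state `q`. -/
structure IsFairBet [Fintype A] (μ : A → ℝ) (g : A → ℝ) : Prop where
  nonneg : ∀ a, 0 ≤ g a
  sum_eq_one : ∑ a, μ a * g a = 1

theorem isFairBet_iff [Fintype A] {g : A → ℝ} :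
    IsFairBet μ g ↔ (∀ a, 0 ≤ g a) ∧ ∑ a, μ a * g a = 1 :=
  ⟨fun h ↦ ⟨h.nonneg, h.sum_eq_one⟩, fun h ↦ ⟨h.1, h.2⟩⟩

theorem IsFairBet.one [Fintype A] (hμsum : ∑ a, μ a = 1) : IsFairBet μ fun _ ↦ 1 where
  nonneg _ := zero_le_one
  sum_eq_one := by simpa using hμsum

theorem IsFairBet.one_add_const_mul [Fintype A] (hμsum : ∑ a, μ a = 1) {h : A → ℝ}
    (hmean : ∑ a, μ a * h a = 0) {ε : ℝ} (hεh : ∀ a, |ε * h a| ≤ 1) :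
    IsFairBet μ fun a ↦ 1 + ε * h a where
  nonneg a := by linarith [neg_le_of_abs_le (hεh a)]
  sum_eq_one := by
    simp only [mul_add, mul_one, mul_left_comm _ ε, Finset.sum_add_distrib, ← Finset.mul_sum,
      hμsum, hmean, mul_zero, add_zero]

theorem sum_mul_log_neg {ι : Type*} [Fintype ι] {p g : ι → ℝ} (hp : ∀ i, 0 ≤ p i)
    (hg : ∀ i, 0 < g i) (hsum : ∑ i, p i * g i ≤ ∑ i, p i) {i : ι} (hpi : 0 < p i)
    (hgi : g i ≠ 1) : ∑ i, p i * Real.log (g i) < 0 :=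
  calc ∑ i, p i * Real.log (g i)
      < ∑ i, p i * (g i - 1) :=
        Finset.sum_lt_sum
          (fun j _ ↦ mul_le_mul_of_nonneg_left (Real.log_le_sub_one_of_pos (hg j)) (hp j))
          ⟨i, Finset.mem_univ i,
            mul_lt_mul_of_pos_left (Real.log_lt_sub_one_of_pos (hg i) hgi) hpi⟩
    _ = ∑ i, p i * g i - ∑ i, p i := by simp only [mul_sub, mul_one, Finset.sum_sub_distrib]
    _ ≤ 0 := sub_nonpos.2 hsum

/-- `Y` is `μ`-balanced: every letter has asymptotic frequency `μ a` in `Y`. -/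
def IsBalanced [DecidableEq A] (μ : A → ℝ) (Y : ℕ → A) : Prop :=
  ∀ a, Tendsto (fun k ↦ (((Finset.range k).filter (fun j ↦ Y j = a)).card : ℝ) / k)
    atTop (𝓝 (μ a))

namespace IsBalanced

variable [DecidableEq A] {Y : ℕ → A}

theorem exists_eq (hY : IsBalanced μ Y) {a : A} (ha : 0 < μ a) : ∃ j, Y j = a := by
  obtain ⟨k, hk⟩ := ((hY a).eventually (lt_mem_nhds ha)).exists
  by_contra! hne
  simp [hne] at hk

theorem tendsto_average [Fintype A] (hY : IsBalanced μ Y) (f : A → ℝ) :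
    Tendsto (fun k : ℕ ↦ (∑ j ∈ Finset.range k, f (Y j)) / k) atTop (𝓝 (∑ a, μ a * f a)) := by
  refine (tendsto_finsetSum _ fun a _ ↦ (hY a).mul_const (f a)).congr fun k ↦ ?_
  simp only [← Finset.sum_fiberwise' (Finset.range k) Y f, Finset.sum_const, nsmul_eq_mul,
    Finset.sum_div, div_mul_eq_mul_div]

variable [Fintype A] {g : A → ℝ}

theorem eventually_prod_le_one (hY : IsBalanced μ Y) (hμpos : ∀ a, 0 < μ a)
    (hμsum : ∑ a, μ a = 1) (hg : IsFairBet μ g) (hgpos : ∀ a, 0 < g a) :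
    ∀ᶠ k in atTop, ∏ j ∈ Finset.range k, g (Y j) ≤ 1 := by
  by_cases hone : ∀ a, g a = 1
  · simp [hone]
  obtain ⟨a, ha⟩ := not_forall.1 hone
  have hdrift : ∑ a, μ a * Real.log (g a) < 0 :=
    sum_mul_log_neg (fun a ↦ (hμpos a).le) hgpos (hg.sum_eq_one.trans hμsum.symm).le (hμpos a) ha
  filter_upwards [(hY.tendsto_average fun a ↦ Real.log (g a)).eventually (gt_mem_nhds hdrift)]
    with k hk
  have hlog : Real.log (∏ j ∈ Finset.range k, g (Y j)) ≤ 0 := by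
    rw [Real.log_prod fun j _ ↦ (hgpos (Y j)).ne']
    by_contra! hpos
    exact hk.not_ge (by positivity)
  exact (Real.log_nonpos_iff (Finset.prod_nonneg fun j _ ↦ hg.nonneg (Y j))).1 hlog

theorem bddAbove_prod (hY : IsBalanced μ Y) (hμpos : ∀ a, 0 < μ a) (hμsum : ∑ a, μ a = 1)
    (hg : IsFairBet μ g) : BddAbove (Set.range fun k ↦ ∏ j ∈ Finset.range k, g (Y j)) := by
  suffices h : ∀ᶠ k in atTop, ∏ j ∈ Finset.range k, g (Y j) ≤ 1 from
    (isBoundedUnder_of_eventually_le h).bddAbove_range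
  by_cases hgpos : ∀ a, 0 < g a
  · exact hY.eventually_prod_le_one hμpos hμsum hg hgpos
  · obtain ⟨a, ha⟩ := not_forall.1 hgpos
    have hga : g a = 0 := le_antisymm (not_lt.1 ha) (hg.nonneg a)
    obtain ⟨j, rfl⟩ := hY.exists_eq (hμpos a)
    filter_upwards [eventually_gt_atTop j] with k hk
    rw [Finset.prod_eq_zero (Finset.mem_range.2 hk) hga]
    exact zero_le_one

end IsBalanced

end Bets

section Selection

theorem prod_filter_range_eq_prod_nth {M : Type*} [CommMonoid M] (p : ℕ → Prop)
    [DecidablePred p] (f : ℕ → M) (n : ℕ) :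
    ∏ i ∈ Finset.range n with p i, f i = ∏ j ∈ Finset.range (Nat.count p n), f (Nat.nth p j) := by
  induction n with
  | zero => simp
  | succ n ih =>
    by_cases hn : p n
    · rw [Finset.range_add_one, Finset.filter_insert, if_pos hn, Finset.prod_insert (by simp), ih,
        Nat.count_succ, if_pos hn, Finset.prod_range_succ, Nat.nth_count hn, mul_comm]
    · rw [Finset.range_add_one, Finset.filter_insert, if_neg hn, ih, Nat.count_succ, if_neg hn,
        add_zero]

theorem eq_nth_of_strictMono_of_range_eq {p : ℕ → Prop} {φ : ℕ → ℕ} (hφ : StrictMono φ)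
    (hrange : Set.range φ = {i | p i}) : φ = Nat.nth p := by
  have hp : {i | p i}.Infinite := hrange ▸ Set.infinite_range_of_injective hφ.injective
  exact (hφ.range_inj (Nat.nth_strictMono hp)).1 (hrange.trans (Nat.range_nth_of_infinite hp).symm)

theorem bddAbove_range_prod_filter_of_finite {M : Type*} [CommMonoid M] [Preorder M]
    [IsDirectedOrder M] {p : ℕ → Prop} [DecidablePred p] (hp : {i | p i}.Finite) (f : ℕ → M) :
    BddAbove (Set.range fun n ↦ ∏ i ∈ Finset.range n with p i, f i) := by
  have hfin : (Set.range fun n ↦ ∏ i ∈ Finset.range n with p i, f i).Finite := by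
    refine (hp.toFinset.powerset.finite_toSet.image fun s ↦ ∏ i ∈ s, f i).subset ?_
    rintro _ ⟨n, rfl⟩
    refine ⟨{i ∈ Finset.range n | p i}, ?_, rfl⟩
    simp only [Finset.coe_powerset, Set.mem_preimage, Set.mem_powerset_iff]
    intro i hi
    simpa using (Finset.mem_filter.1 hi).2
  have : Nonempty M := ⟨1⟩
  exact hfin.bddAbove

variable {A : Type*} [DecidableEq A]

/-- The conclusion of the Agafonov theorem for the selector that picks the letters of `X` at the
positions satisfying `p`: they are finitely many, or form a `μ`-balanced sequence. -/
def SelectsFiniteOrBalanced (μ : A → ℝ) (X : ℕ → A) (p : ℕ → Prop) : Prop :=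
  {i | p i}.Finite ∨
    ∃ φ : ℕ → ℕ, StrictMono φ ∧ Set.range φ = {i | p i} ∧ IsBalanced μ fun j ↦ X (φ j)

theorem SelectsFiniteOrBalanced.bddAbove_prod [Fintype A] {μ : A → ℝ} (hμpos : ∀ a, 0 < μ a)
    (hμsum : ∑ a, μ a = 1) {X : ℕ → A} {p : ℕ → Prop} [DecidablePred p]
    (hp : SelectsFiniteOrBalanced μ X p) {g : A → ℝ} (hg : IsFairBet μ g) :
    BddAbove (Set.range fun n ↦ ∏ i ∈ Finset.range n with p i, g (X i)) := by
  rcases hp with hfin | ⟨φ, hφ, hrange, hbal⟩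
  · exact bddAbove_range_prod_filter_of_finite hfin fun i ↦ g (X i)
  · obtain rfl := eq_nth_of_strictMono_of_range_eq hφ hrange
    refine (hbal.bddAbove_prod hμpos hμsum hg).mono ?_
    rintro _ ⟨n, rfl⟩
    exact ⟨Nat.count p n, (prod_filter_range_eq_prod_nth p (fun i ↦ g (X i)) n).symm⟩

end Selection

section Capital

variable {Q A : Type*}

theorem pref_succ (X : ℕ → A) (n : ℕ) : pref X (n + 1) = pref X n ++ [X n] := by
  simp only [pref, List.range_succ, List.map_append, List.map_singleton]

theorem dstar_pref_succ (δ : Q → A → Q) (q : Q) (X : ℕ → A) (n : ℕ) :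
    dstar δ q (pref X (n + 1)) = δ (dstar δ q (pref X n)) (X n) := by
  simp only [dstar, pref_succ, List.foldl_append, List.foldl_cons, List.foldl_nil]

theorem capital_append (δ : Q → A → Q) (γ : Q → A → ℝ) (q : Q) (v w : List A) :
    capital δ γ q (v ++ w) = capital δ γ q v * capital δ γ (dstar δ q v) w := by
  induction v generalizing q with
  | nil => simp [capital, dstar]
  | cons a v ih => simp only [List.cons_append, capital, ih, dstar, List.foldl_cons, mul_assoc]

theorem capital_pref (δ : Q → A → Q) (γ : Q → A → ℝ) (q : Q) (X : ℕ → A) (n : ℕ) :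
    capital δ γ q (pref X n) = ∏ t ∈ Finset.range n, γ (dstar δ q (pref X t)) (X t) := by
  induction n with
  | zero => simp [pref, capital]
  | succ n ih =>
    rw [pref_succ, capital_append, ih, Finset.prod_range_succ, capital, capital, mul_one]

theorem capital_equiv {Q' : Type*} (e : Q ≃ Q') (δ : Q → A → Q) (γ : Q → A → ℝ) (q : Q)
    (w : List A) :
    capital (fun s a ↦ e (δ (e.symm s) a)) (fun s ↦ γ (e.symm s)) (e q) w = capital δ γ q w := by
  induction w generalizing q with
  | nil => rfl
  | cons a w ih => simp only [capital, e.symm_apply_apply, ih]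

variable [Fintype A] {μ : A → ℝ}

theorem bddAbove_capital_of_selectsFiniteOrBalanced [DecidableEq A] [Finite Q]
    (hμpos : ∀ a, 0 < μ a) (hμsum : ∑ a, μ a = 1) {X : ℕ → A} {δ : Q → A → Q} {qI : Q}
    (hsel : ∀ q, SelectsFiniteOrBalanced μ X fun t ↦ dstar δ qI (pref X t) = q)
    {γ : Q → A → ℝ} (hγ : ∀ q, IsFairBet μ (γ q)) :
    BddAbove (Set.range fun n ↦ capital δ γ qI (pref X n)) := by
  classical
  have := Fintype.ofFinite Q
  choose C hC using fun q ↦ (hsel q).bddAbove_prod hμpos hμsum (hγ q)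
  refine ⟨∏ q, C q, ?_⟩
  rintro _ ⟨n, rfl⟩
  calc capital δ γ qI (pref X n)
      = ∏ q, ∏ t ∈ Finset.range n with dstar δ qI (pref X t) = q, γ q (X t) := by
        rw [capital_pref, ← Finset.prod_fiberwise _ fun t ↦ dstar δ qI (pref X t)]
        refine Finset.prod_congr rfl fun q _ ↦ Finset.prod_congr rfl fun t ht ↦ ?_
        rw [(Finset.mem_filter.1 ht).2]
    _ ≤ ∏ q, C q :=
        Finset.prod_le_prod (fun q _ ↦ Finset.prod_nonneg fun t _ ↦ (hγ q).nonneg (X t))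
          fun q _ ↦ hC q ⟨n, rfl⟩

/-- Every automatic `μ`-gambler has bounded capital on `X`. The states are `Fin m`, as in the
theorem; `NoGamblerWins.bddAbove_capital` allows any finite type of states. -/
def NoGamblerWins (μ : A → ℝ) (X : ℕ → A) : Prop :=
  ∀ (m : ℕ) (δ : Fin m → A → Fin m) (qI : Fin m) (γ : Fin m → A → ℝ),
    (∀ q, IsFairBet μ (γ q)) → BddAbove (Set.range fun n ↦ capital δ γ qI (pref X n))

theorem NoGamblerWins.bddAbove_capital [Finite Q] {X : ℕ → A} (hX : NoGamblerWins μ X)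
    (δ : Q → A → Q) (qI : Q) {γ : Q → A → ℝ} (hγ : ∀ q, IsFairBet μ (γ q)) :
    BddAbove (Set.range fun n ↦ capital δ γ qI (pref X n)) := by
  let e := Finite.equivFin Q
  simpa only [capital_equiv] using
    hX _ (fun s a ↦ e (δ (e.symm s) a)) (e qI) (fun s ↦ γ (e.symm s)) fun s ↦ hγ (e.symm s)

end Capital

section Averages

theorem sub_two_mul_sq_le_log_one_add {x : ℝ} (hx : |x| ≤ 1 / 2) :
    x - 2 * x ^ 2 ≤ Real.log (1 + x) := by
  have hlow : -(1 / 2) ≤ x := neg_le_of_abs_le hx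
  have hpos : 0 < 1 + x := by linarith
  have hinv : (1 + x)⁻¹ ≤ 1 - x + 2 * x ^ 2 := by
    rw [inv_le_iff_one_le_mul₀ hpos]
    nlinarith [mul_nonneg (sq_nonneg x) (by linarith : 0 ≤ 1 + 2 * x)]
  linarith [Real.one_sub_inv_le_log_of_pos hpos]

theorem eventually_div_lt_of_forall_mul_le {S : ℕ → ℝ}
    (hS : ∀ ε : ℝ, 0 < ε → ε ≤ 1 / 2 → ∃ C, ∀ n : ℕ, ε * S n ≤ C + 2 * ε ^ 2 * n)
    {η : ℝ} (hη : 0 < η) : ∀ᶠ n : ℕ in atTop, S n / n < η := by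
  obtain ⟨ε, hε, hεη⟩ : ∃ ε, 0 < ε ∧ ε ≤ min (1 / 2) (η / 4) := ⟨_, by positivity, le_rfl⟩
  obtain ⟨C, hC⟩ := hS ε hε (le_min_iff.1 hεη).1
  have hsmall : ∀ᶠ n : ℕ in atTop, C / ε / n < η / 2 :=
    (tendsto_const_div_atTop_nhds_zero_nat (C / ε)).eventually (gt_mem_nhds (half_pos hη))
  filter_upwards [hsmall, eventually_gt_atTop 0] with n hn hnpos
  have hn0 : (0 : ℝ) < n := Nat.cast_pos.2 hnpos
  calc S n / n ≤ C / ε / n + 2 * ε := by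
        rw [div_add' _ _ _ hn0.ne', div_le_div_iff_of_pos_right hn0, div_add' _ _ _ hε.ne',
          le_div_iff₀ hε]
        linarith [hC n]
    _ < η := by linarith [(le_min_iff.1 hεη).2]

theorem exists_mul_sum_le_of_bddAbove_prod {x : ℕ → ℝ} (hx : ∀ t, |x t| ≤ 1) {ε : ℝ}
    (hε : |ε| ≤ 1 / 2)
    (hbdd : BddAbove (Set.range fun n ↦ ∏ t ∈ Finset.range n, (1 + ε * x t))) :
    ∃ C, ∀ n : ℕ, ε * ∑ t ∈ Finset.range n, x t ≤ C + 2 * ε ^ 2 * n := by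
  have hsmall (t : ℕ) : |ε * x t| ≤ 1 / 2 := by
    rw [abs_mul]
    exact (mul_le_of_le_one_right (abs_nonneg ε) (hx t)).trans hε
  have hpos (t : ℕ) : 0 < 1 + ε * x t := by linarith [neg_le_of_abs_le (hsmall t)]
  have hterm (t : ℕ) : ε * x t - 2 * ε ^ 2 ≤ Real.log (1 + ε * x t) := by
    have hsq : (ε * x t) ^ 2 ≤ ε ^ 2 := by
      rw [mul_pow]
      exact mul_le_of_le_one_right (sq_nonneg ε) ((sq_le_one_iff_abs_le_one _).2 (hx t))
    linarith [sub_two_mul_sq_le_log_one_add (hsmall t)]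
  obtain ⟨C, hC⟩ := hbdd
  refine ⟨Real.log C, fun n ↦ ?_⟩
  have hlog : ∑ t ∈ Finset.range n, (ε * x t - 2 * ε ^ 2) ≤ Real.log C :=
    calc ∑ t ∈ Finset.range n, (ε * x t - 2 * ε ^ 2)
        ≤ ∑ t ∈ Finset.range n, Real.log (1 + ε * x t) := Finset.sum_le_sum fun t _ ↦ hterm t
      _ = Real.log (∏ t ∈ Finset.range n, (1 + ε * x t)) :=
          (Real.log_prod fun t _ ↦ (hpos t).ne').symm
      _ ≤ Real.log C := Real.log_le_log (Finset.prod_pos fun t _ ↦ hpos t) (hC ⟨n, rfl⟩)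
  rw [Finset.sum_sub_distrib, ← Finset.mul_sum, Finset.sum_const, Finset.card_range,
    nsmul_eq_mul] at hlog
  linarith

theorem tendsto_average_zero_of_bddAbove_prod {x : ℕ → ℝ} (hx : ∀ t, |x t| ≤ 1)
    (hbdd : ∀ ε : ℝ, |ε| ≤ 1 / 2 →
      BddAbove (Set.range fun n ↦ ∏ t ∈ Finset.range n, (1 + ε * x t))) :
    Tendsto (fun n : ℕ ↦ (∑ t ∈ Finset.range n, x t) / n) atTop (𝓝 0) := by
  refine tendsto_order.2 ⟨fun η hη ↦ ?_, fun η hη ↦ ?_⟩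
  · have hneg : ∀ᶠ n : ℕ in atTop, (-∑ t ∈ Finset.range n, x t) / n < -η :=
      eventually_div_lt_of_forall_mul_le (fun ε hε hε' ↦ by
        simpa only [neg_mul_comm, even_two.neg_pow] using exists_mul_sum_le_of_bddAbove_prod hx
          (ε := -ε) (by rwa [abs_neg, abs_of_pos hε]) (hbdd (-ε) (by rwa [abs_neg, abs_of_pos hε])))
        (neg_pos.2 hη)
    simpa only [neg_div, neg_lt_neg_iff] using hneg
  · refine eventually_div_lt_of_forall_mul_le (fun ε hε hε' ↦ ?_) hη
    have habs : |ε| ≤ 1 / 2 := by rwa [abs_of_pos hε]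
    exact exists_mul_sum_le_of_bddAbove_prod hx habs (hbdd ε habs)

end Averages

section Occurrences

variable {A : Type*}

/-- The word `u` occurs in `X` at position `i`. -/
abbrev OccursAt (X : ℕ → A) (u : List A) (i : ℕ) : Prop :=
  pref (fun j ↦ X (i + j)) u.length = u

theorem occursAt_append_singleton {X : ℕ → A} {u : List A} {a : A} {i : ℕ} :
    OccursAt X (u ++ [a]) i ↔ OccursAt X u i ∧ X (i + u.length) = a := by
  rw [OccursAt, List.length_append, List.length_singleton, pref_succ, List.append_singleton_inj]

theorem occursAt_iff_eq_get {X : ℕ → A} {u : List A} {i : ℕ} :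
    OccursAt X u i ↔ (fun j : Fin u.length ↦ X (i + j)) = u.get := by
  simp [List.ext_getElem_iff, funext_iff, Fin.forall_iff, pref]

/-- Transition function of the automaton whose state is the window of the last `L` letters, oldest
letter first. -/
def shiftWindow {L : ℕ} (s : Fin L → A) (b : A) : Fin L → A :=
  fun j ↦ if h : j.1 + 1 < L then s ⟨j.1 + 1, h⟩ else b

theorem dstar_shiftWindow {L : ℕ} (s : Fin L → A) (X : ℕ → A) (n : ℕ) :
    dstar shiftWindow s (pref X (L + n)) = fun j : Fin L ↦ X (n + j) := by
  have hrun (t : ℕ) (j : Fin L) (hj : L ≤ t + j) :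
      dstar shiftWindow s (pref X t) j = X (t + j - L) := by
    induction t generalizing j with
    | zero => omega
    | succ t ih =>
      rw [dstar_pref_succ, shiftWindow]
      split_ifs with h
      · rw [ih ⟨j + 1, h⟩ (by lia)]
        congr 1
        lia
      · congr 1
        omega
  funext j
  rw [hrun (L + n) j (by omega)]
  congr 1
  omega

variable [DecidableEq A]

/-- Number of occurrences of `u` in `X` at positions `i < n`. -/
def occCount (X : ℕ → A) (u : List A) (n : ℕ) : ℕ :=
  ((Finset.range n).filter fun i ↦ OccursAt X u i).card

theorem occCount_nil (X : ℕ → A) (n : ℕ) : occCount X [] n = n := by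
  rw [occCount, Finset.filter_true_of_mem (p := OccursAt X []) fun _ _ ↦ rfl, Finset.card_range]

theorem freq_eq_occCount_div (w : List A) (X : ℕ → A) (n : ℕ) :
    freq w X n = occCount X w (n + 2 - w.length) / (n + 2 - w.length : ℕ) := rfl

theorem sum_occursAt_indicator_sub (μ : A → ℝ) (X : ℕ → A) (u : List A) (a : A) (n : ℕ) :
    ∑ i ∈ Finset.range n with OccursAt X u i, ((if X (i + u.length) = a then 1 else 0) - μ a) =
      occCount X (u ++ [a]) n - μ a * occCount X u n := by
  simp only [Finset.sum_sub_distrib, Finset.sum_boole, Finset.filter_filter, Finset.sum_const,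
    nsmul_eq_mul, occCount, occursAt_append_singleton, mul_comm (μ a)]

/-- The bets of the gambler who stakes `1 + ε h` on the next letter when the window of the last
letters reads `u`, and otherwise does not bet. -/
def wordBet (u : List A) (ε : ℝ) (h : A → ℝ) (s : Fin u.length → A) (b : A) : ℝ :=
  if s = u.get then 1 + ε * h b else 1

theorem wordBet_pos {u : List A} {ε : ℝ} {h : A → ℝ} (hεh : ∀ a, |ε * h a| < 1)
    (s : Fin u.length → A) (b : A) : 0 < wordBet u ε h s b := by
  unfold wordBet
  split_ifs
  · linarith [neg_lt_of_abs_lt (hεh b)]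
  · exact one_pos

variable [Fintype A] {μ : A → ℝ} {X : ℕ → A}

theorem isFairBet_wordBet (hμsum : ∑ a, μ a = 1) (u : List A) {h : A → ℝ}
    (hmean : ∑ a, μ a * h a = 0) {ε : ℝ} (hεh : ∀ a, |ε * h a| ≤ 1) (s : Fin u.length → A) :
    IsFairBet μ (wordBet u ε h s) := by
  unfold wordBet
  split_ifs
  · exact IsFairBet.one_add_const_mul hμsum hmean hεh
  · exact IsFairBet.one hμsum

theorem NoGamblerWins.bddAbove_prod_after_occurrences (hX : NoGamblerWins μ X)
    (hμsum : ∑ a, μ a = 1) (u : List A) {h : A → ℝ} (hmean : ∑ a, μ a * h a = 0) {ε : ℝ}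
    (hεh : ∀ a, |ε * h a| < 1) :
    BddAbove (Set.range fun n ↦ ∏ i ∈ Finset.range n,
      (1 + ε * if OccursAt X u i then h (X (i + u.length)) else 0)) := by
  let s₀ : Fin u.length → A := fun _ ↦ X 0
  have hbet (i : ℕ) : wordBet u ε h (dstar shiftWindow s₀ (pref X (u.length + i)))
      (X (u.length + i)) = 1 + ε * if OccursAt X u i then h (X (i + u.length)) else 0 := by
    simp only [wordBet, dstar_shiftWindow, occursAt_iff_eq_get]
    split_ifs <;> simp [add_comm u.length i]
  obtain ⟨C, hC⟩ := hX.bddAbove_capital shiftWindow s₀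
    (isFairBet_wordBet hμsum u hmean fun a ↦ (hεh a).le)
  -- The letter after an occurrence at position `i` is read at time `|u| + i`. The bets at times
  -- `< |u|` depend on the arbitrary `s₀`, but contribute only a positive constant factor.
  let P := capital shiftWindow (wordBet u ε h) s₀ (pref X u.length)
  have hP : 0 < P := by
    simp only [P, capital_pref]
    exact Finset.prod_pos fun t _ ↦ wordBet_pos hεh _ _
  refine ⟨C / P, ?_⟩
  rintro _ ⟨n, rfl⟩
  rw [le_div_iff₀' hP]
  have hCn := hC ⟨u.length + n, rfl⟩
  simpa only [capital_pref, Finset.prod_range_add, hbet, P] using hCn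

theorem NoGamblerWins.tendsto_average_after_occurrences (hX : NoGamblerWins μ X)
    (hμsum : ∑ a, μ a = 1) (u : List A) {h : A → ℝ} (hmean : ∑ a, μ a * h a = 0)
    (hh : ∀ a, |h a| ≤ 1) :
    Tendsto (fun n : ℕ ↦
      (∑ i ∈ Finset.range n with OccursAt X u i, h (X (i + u.length))) / n) atTop (𝓝 0) := by
  simp only [Finset.sum_filter]
  refine tendsto_average_zero_of_bddAbove_prod (fun i ↦ ?_) fun ε hε ↦
    hX.bddAbove_prod_after_occurrences hμsum u hmean fun a ↦ ?_
  · split_ifs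
    · exact hh _
    · simp
  · rw [abs_mul]
    linarith [mul_le_of_le_one_right (abs_nonneg ε) (hh a)]

theorem NoGamblerWins.tendsto_occCount (hX : NoGamblerWins μ X) (hμnonneg : ∀ a, 0 ≤ μ a)
    (hμsum : ∑ a, μ a = 1) (u : List A) :
    Tendsto (fun n : ℕ ↦ (occCount X u n : ℝ) / n) atTop (𝓝 (wmeas μ u)) := by
  induction u using List.reverseRecOn with
  | nil =>
    refine tendsto_const_nhds.congr' ?_
    filter_upwards [eventually_ne_atTop 0] with n hn
    simp [occCount_nil, wmeas, hn]
  | append_singleton u a ih =>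
    have hmean : ∑ b, μ b * ((if b = a then 1 else 0) - μ a) = 0 := by
      simp [mul_sub, Finset.sum_sub_distrib, ← Finset.sum_mul, hμsum]
    have hbound (b : A) : |(if b = a then 1 else 0) - μ a| ≤ 1 := by
      have ha : μ a ≤ 1 :=
        hμsum ▸ Finset.single_le_sum (fun c _ ↦ hμnonneg c) (Finset.mem_univ a)
      rw [abs_le]
      split_ifs <;> constructor <;> linarith [hμnonneg a]
    have hdev := hX.tendsto_average_after_occurrences hμsum u hmean hbound
    have hwmeas : wmeas μ (u ++ [a]) = 0 + μ a * wmeas μ u := by simp [wmeas, mul_comm]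
    rw [hwmeas]
    refine (hdev.add (ih.const_mul (μ a))).congr fun n ↦ ?_
    rw [sum_occursAt_indicator_sub]
    ring

theorem NoGamblerWins.bNormal (hX : NoGamblerWins μ X) (hμnonneg : ∀ a, 0 ≤ μ a)
    (hμsum : ∑ a, μ a = 1) : BNormal μ X := by
  intro w _
  simp only [freq_eq_occCount_div]
  exact (hX.tendsto_occCount hμnonneg hμsum w).comp
    ((tendsto_sub_atTop_nat w.length).comp (tendsto_add_atTop_nat 2))

end Occurrences

/-- Schnorr–Stimm theorem for Bernoulli measures: assuming as a
hypothesis the Agafonov theorem for Bernoulli measures (every automatic selector,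
applied to a `μ`-normal sequence, selects a subsequence that is finite or
`μ`-balanced), a sequence `X` is `μ`-normal if and only if every `μ`-gambler has
bounded capital while betting on `X`. -/
theorem schnorr_stimm_bernoulli
    {A : Type*} [Fintype A] [DecidableEq A]
    (μ : A → ℝ) (hμpos : ∀ a, 0 < μ a) (hμsum : ∑ a, μ a = 1)
    (X : ℕ → A)
    (hAgafonov : ∀ (X' : ℕ → A), BNormal μ X' →
      ∀ (m : ℕ) (δ : Fin m → A → Fin m) (qI : Fin m) (S : Finset (Fin m)),
        {i : ℕ | dstar δ qI (pref X' i) ∈ S}.Finite ∨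
        ∃ φ : ℕ → ℕ, StrictMono φ ∧
          Set.range φ = {i : ℕ | dstar δ qI (pref X' i) ∈ S} ∧
          ∀ a : A, Tendsto
            (fun k => (((Finset.range k).filter (fun j => X' (φ j) = a)).card : ℝ) / k)
            atTop (𝓝 (μ a))) :
    BNormal μ X ↔
      ∀ (m : ℕ) (δ : Fin m → A → Fin m) (qI : Fin m) (γ : Fin m → A → ℝ),
        (∀ q a, 0 ≤ γ q a) → (∀ q, ∑ a, μ a * γ q a = 1) →
        ∃ C : ℝ, ∀ n, capital δ γ qI (pref X n) ≤ C := by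
  have hgamblers : (∀ (m : ℕ) (δ : Fin m → A → Fin m) (qI : Fin m) (γ : Fin m → A → ℝ),
      (∀ q a, 0 ≤ γ q a) → (∀ q, ∑ a, μ a * γ q a = 1) →
      ∃ C : ℝ, ∀ n, capital δ γ qI (pref X n) ≤ C) ↔ NoGamblerWins μ X := by
    simp only [NoGamblerWins, isFairBet_iff, forall_and, and_imp, bddAbove_def,
      Set.forall_mem_range]
  rw [hgamblers]
  refine ⟨fun hX m δ qI γ hγ ↦ ?_, fun hX ↦ hX.bNormal (fun a ↦ (hμpos a).le) hμsum⟩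
  refine bddAbove_capital_of_selectsFiniteOrBalanced hμpos hμsum (fun q ↦ ?_) hγ
  simpa only [SelectsFiniteOrBalanced, IsBalanced, Finset.mem_singleton] using
    hAgafonov X hX m δ qI {q}
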